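/- arXiv:2407.05251 — 3 statements merged into one kernel-verified Lean document; each statement's English description precedes it below -/
import Mathlib

section
/- Let a group G act freely by homeomorphisms on a compact Hausdorff space X with every G-orbit dense (i.e., the action is free and minimal), let C ⊆ X be a compact set that meets every G-orbit at most once, and let O ⊆ X be a nonempty open set. Then C ≺ O (dynamical subequivalence). -/
/-- Dynamical subequivalence `K ≺ O`: there are finitely many open sets `U_1, …, U_n`
and group elements `g_1, …, g_n` with `K ⊆ ⋃ U_i`, the translates `g_i • U_i`
pairwise disjoint, and `⋃ g_i • U_i ⊆ O`. -/
def DynSubeq (G : Type*) [Group G] {X : Type*} [TopologicalSpace X] [MulAction G X]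
    (K O : Set X) : Prop :=
  ∃ (n : ℕ) (U : Fin n → Set X) (g : Fin n → G),
    (∀ i, IsOpen (U i)) ∧ K ⊆ ⋃ i, U i ∧
    (Pairwise fun i j => Disjoint ((g i • ·) '' U i) ((g j • ·) '' U j)) ∧
    (⋃ i, (g i • ·) '' U i) ⊆ O

/-- If a group `G` acts freely and minimally by homeomorphisms on a compact Hausdorff
space `X`, `C` is a compact set meeting every `G`-orbit at most once, and `O` is a
nonempty open set, then `C ≺ O`. -/
theorem stmt_10 {G X : Type*} [Group G] [TopologicalSpace X] [CompactSpace X]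
    [T2Space X] [MulAction G X]
    (hcont : ∀ g : G, Continuous (fun x : X => g • x))
    (hfree : ∀ (g : G) (x : X), g • x = x → g = 1)
    (hmin : ∀ x : X, Dense (Set.range fun g : G => g • x))
    (C : Set X) (hCcpt : IsCompact C)
    (hC : ∀ x ∈ C, ∀ y ∈ C, (∃ g : G, y = g • x) → x = y)
    (O : Set X) (hOopen : IsOpen O) (hOne : O.Nonempty) :
    DynSubeq G C O := by
  classical
  have hV : ∀ g h : G, ∃ V : Set X, IsOpen V ∧ C ⊆ V ∧
      (g ≠ h → Disjoint ((g • ·) '' V) ((h • ·) '' V)) := by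
    intro g h
    by_cases hgh : g = h
    · exact ⟨Set.univ, isOpen_univ, Set.subset_univ _, fun H => absurd hgh H⟩
    · have hd : Disjoint ((g • ·) '' C) ((h • ·) '' C) := by
        rw [Set.disjoint_left]
        rintro _ ⟨x, hx, rfl⟩ ⟨y, hy, hxy⟩
        have hxy' : h • y = g • x := hxy
        have e : y = (h⁻¹ * g) • x := by
          rw [mul_smul, ← hxy', inv_smul_smul]
        have exy := hC x hx y hy ⟨_, e⟩
        rw [← exy] at e
        exact hgh (inv_mul_eq_one.mp (hfree _ _ e.symm)).symm
      obtain ⟨A, B, hA, hB, hCA, hCB, hAB⟩ :=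
        SeparatedNhds.of_isCompact_isCompact (hCcpt.image (hcont g)) (hCcpt.image (hcont h)) hd
      refine ⟨(g • ·) ⁻¹' A ∩ (h • ·) ⁻¹' B,
        (hA.preimage (hcont g)).inter (hB.preimage (hcont h)),
        fun x hx => ⟨hCA ⟨x, hx, rfl⟩, hCB ⟨x, hx, rfl⟩⟩, fun _ => ?_⟩
      refine hAB.mono ?_ ?_
      · rintro _ ⟨x, hx, rfl⟩
        exact hx.1
      · rintro _ ⟨x, hx, rfl⟩
        exact hx.2
  choose V hVo hCV hVd using hV
  obtain ⟨s, hs⟩ := hCcpt.elim_finite_subcover (fun g : G => (g • ·) ⁻¹' O)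
    (fun g => hOopen.preimage (hcont g)) (by
      intro x _
      obtain ⟨_, hy, g, rfl⟩ := (hmin x).inter_open_nonempty O hOopen hOne
      exact Set.mem_iUnion.2 ⟨g, hy⟩)
  let W : Set X := ⋂ g ∈ s, ⋂ h ∈ s, V g h
  have hWo : IsOpen W :=
    isOpen_biInter_finset fun g _ => isOpen_biInter_finset fun h _ => hVo g h
  have hCW : C ⊆ W :=
    Set.subset_iInter₂ fun g _ => Set.subset_iInter₂ fun h _ => hCV g h
  have hWV : ∀ g ∈ s, ∀ h ∈ s, W ⊆ V g h := by
    intro g hg h hh x hx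
    exact Set.mem_iInter₂.1 (Set.mem_iInter₂.1 hx g hg) h hh
  let k : Fin s.card → G := fun i => (s.equivFin.symm i : G)
  have hks : ∀ i, k i ∈ s := fun i => (s.equivFin.symm i).2
  have hkinj : Function.Injective k :=
    Subtype.val_injective.comp s.equivFin.symm.injective
  refine ⟨s.card, fun i => W ∩ (k i • ·) ⁻¹' O, k,
    fun i => hWo.inter (hOopen.preimage (hcont _)), ?_, ?_, ?_⟩
  · intro x hx
    obtain ⟨g, hg, hgx⟩ := Set.mem_iUnion₂.1 (hs hx)
    refine Set.mem_iUnion.2 ⟨s.equivFin ⟨g, hg⟩, hCW hx, ?_⟩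
    simpa [k] using hgx
  · intro i j hij
    exact (hVd (k i) (k j) (hkinj.ne hij)).mono
      (Set.image_mono (Set.inter_subset_left.trans (hWV _ (hks i) _ (hks j))))
      (Set.image_mono (Set.inter_subset_left.trans (hWV _ (hks i) _ (hks j))))
  · refine Set.iUnion_subset fun i => ?_
    rintro _ ⟨x, hx, rfl⟩
    exact hx.2
end

section
/- Let a group G act by homeomorphisms on a compact Hausdorff space X without isolated points, with every G-orbit dense in X. If C ⊆ X is a compact set that meets every G-orbit at most once, then C has empty interior. -/
/-- If a group `G` acts minimally by homeomorphisms on a compact Hausdorff space `X`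
without isolated points, then every compact set meeting each `G`-orbit at most once
has empty interior. -/
theorem stmt_11 {G X : Type*} [Group G] [TopologicalSpace X] [CompactSpace X]
    [T2Space X] [MulAction G X]
    (hnoiso : ∀ x : X, ¬ IsOpen ({x} : Set X))
    (hcont : ∀ g : G, Continuous (fun x : X => g • x))
    (hmin : ∀ x : X, Dense (Set.range fun g : G => g • x))
    (C : Set X) (hCcpt : IsCompact C)
    (hC : ∀ x ∈ C, ∀ y ∈ C, (∃ g : G, y = g • x) → x = y) :
    interior C = ∅ := by
  rw [Set.eq_empty_iff_forall_notMem]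
  intro x hx
  have ho : IsOpen (interior C \ {x}) := isOpen_interior.sdiff isClosed_singleton
  have hne : (interior C \ {x}).Nonempty := by
    by_contra h
    rw [Set.not_nonempty_iff_eq_empty, Set.diff_eq_empty] at h
    have e : interior C = {x} := h.antisymm (Set.singleton_subset_iff.mpr hx)
    exact hnoiso x (e ▸ isOpen_interior)
  obtain ⟨y, hy, g, hg⟩ := (hmin x).inter_open_nonempty _ ho hne
  exact hy.2 (hC x (interior_subset hx) y (interior_subset hy.1) ⟨g, hg.symm⟩).symm
end

section
/- Let a group G act by homeomorphisms on a compact Hausdorff space X without isolated points, with every G-orbit dense in X, and let (C_n)_{n ∈ ℕ} be a sequence of compact subsets of X, each of which meets every G-orbit at most once. Then no nonempty open subset of X is contained in ⋃_{n ∈ ℕ} C_n. -/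
/-- If a group `G` acts minimally by homeomorphisms on a compact Hausdorff space `X`
without isolated points and `(C_n)` is a sequence of compact sets, each meeting every
`G`-orbit at most once, then no nonempty open set is contained in `⋃ n, C n`. -/
theorem stmt_12 {G X : Type*} [Group G] [TopologicalSpace X] [CompactSpace X]
    [T2Space X] [MulAction G X]
    (hnoiso : ∀ x : X, ¬ IsOpen ({x} : Set X))
    (hcont : ∀ g : G, Continuous (fun x : X => g • x))
    (hmin : ∀ x : X, Dense (Set.range fun g : G => g • x))
    (C : ℕ → Set X) (hCcpt : ∀ n, IsCompact (C n))
    (hC : ∀ n, ∀ x ∈ C n, ∀ y ∈ C n, (∃ g : G, y = g • x) → x = y) :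
    ∀ U : Set X, IsOpen U → U.Nonempty → ¬ U ⊆ ⋃ n, C n := by
  intro U hU hne hsub
  have hd : Dense (⋂ n, (C n)ᶜ) := by
    apply dense_iInter_of_isOpen
    · intro n
      exact (hCcpt n).isClosed.isOpen_compl
    · intro n
      rw [← interior_eq_empty_iff_dense_compl, Set.eq_empty_iff_forall_notMem]
      intro x hx
      have hopen : IsOpen (interior (C n) \ {x}) := isOpen_interior.sdiff isClosed_singleton
      have hnon : (interior (C n) \ {x}).Nonempty := by
        by_contra h
        rw [Set.not_nonempty_iff_eq_empty, Set.diff_eq_empty] at h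
        have : interior (C n) = {x} :=
          Set.Subset.antisymm h (Set.singleton_subset_iff.2 hx)
        exact hnoiso x (this ▸ isOpen_interior)
      obtain ⟨y, hy, g, hg⟩ := (hmin x).inter_open_nonempty _ hopen hnon
      exact hy.2 (hC n x (interior_subset hx) y (interior_subset hy.1) ⟨g, hg.symm⟩).symm
  obtain ⟨y, hyU, hy⟩ := hd.inter_open_nonempty U hU hne
  obtain ⟨n, hn⟩ := Set.mem_iUnion.1 (hsub hyU)
  exact Set.mem_iInter.1 hy n hn
end
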